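/- arXiv:1311.0234 — 5 statements merged into one kernel-verified Lean document; each statement's English description precedes it below -/
import Mathlib

section
/- Let k be a natural number, D a nonzero real number, and c_1, …, c_{k+1} real numbers. Then there exists a real polynomial P of degree exactly k+1 (one may take its leading coefficient to be (−1)^k · D/(2·(k+1)!)) such that for all real numbers y and X_1, …, X_k satisfying the trace system with these data, P(y) = 0. -/
/-- The trace system of the paper (proof of Theorem 4): for every `n ∈ {1, …, k+1}`,
`(D/2)·y^n + Σ_{i=1}^{k} n(n−1)⋯(n−i+1) · y^{n−i} · X_i = c_n`, where the descending
factorial `n(n−1)⋯(n−i+1)` is `Nat.descFactorial n i` (which vanishes for `i > n`). -/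
def TraceSystem (k : ℕ) (D : ℝ) (c : ℕ → ℝ) (y : ℝ) (X : ℕ → ℝ) : Prop :=
  ∀ n ∈ Finset.Icc 1 (k + 1),
    D / 2 * y ^ n +
      ∑ i ∈ Finset.Icc 1 k, (Nat.descFactorial n i : ℝ) * y ^ (n - i) * X i = c n

open Polynomial in
lemma aux_vanish (N i : ℕ) (hi : i < N) (y : ℝ) :
    ∑ n ∈ Finset.range (N + 1),
      (N.choose n : ℝ) * (-y) ^ (N - n) * ((n.descFactorial i : ℝ) * y ^ (n - i)) = 0 := by
  have h : ((X + C (-y) : ℝ[X]) ^ N) =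
      ∑ n ∈ Finset.range (N + 1), C ((N.choose n : ℝ) * (-y) ^ (N - n)) * X ^ n := by
    rw [add_pow]
    refine Finset.sum_congr rfl fun n _ => ?_
    simp only [C_mul, C_pow, map_natCast]
    ring
  have h2 := congrArg (fun p => eval y (derivative^[i] p)) h
  simp only [iterate_derivative_X_add_pow, iterate_derivative_sum, iterate_derivative_C_mul,
    iterate_derivative_X_pow_eq_natCast_mul, eval_finset_sum] at h2
  simp only [eval_mul, eval_C, eval_pow, eval_X, eval_natCast, eval_add, eval_smul,
    add_neg_cancel] at h2
  rw [zero_pow (by omega)] at h2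
  simp only [smul_zero, mul_zero] at h2
  exact h2.symm

open Polynomial in
theorem aux_sum (k : ℕ) (D : ℝ) (c : ℕ → ℝ) (y : ℝ) (x : ℕ → ℝ) (h : TraceSystem k D c y x) :
    ∑ n ∈ Finset.range (k + 1), ((k + 1).choose (n + 1) : ℝ) * (-y) ^ (k - n) * c (n + 1)
      = (-1) ^ k * D / 2 * y ^ (k + 1) := by
  have hc : ∀ n ∈ Finset.range (k + 1),
      ((k + 1).choose (n + 1) : ℝ) * (-y) ^ (k - n) * c (n + 1) =
      D / 2 * (((k + 1).choose (n + 1) : ℝ) * (-y) ^ (k - n) * y ^ (n + 1)) +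
      ∑ i ∈ Finset.Icc 1 k, ((k + 1).choose (n + 1) : ℝ) * (-y) ^ (k - n) *
        (((n + 1).descFactorial i : ℝ) * y ^ (n + 1 - i)) * x i := by
    intro n hn
    have hn' := Finset.mem_range.1 hn
    rw [← h (n + 1) (Finset.mem_Icc.2 ⟨by omega, by omega⟩), mul_add, Finset.mul_sum]
    congr 1
    · ring
    · exact Finset.sum_congr rfl fun i _ => by ring
  rw [Finset.sum_congr rfl hc, Finset.sum_add_distrib, ← Finset.mul_sum, Finset.sum_comm]
  have h0 : ∑ i ∈ Finset.Icc 1 k, ∑ n ∈ Finset.range (k + 1),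
      ((k + 1).choose (n + 1) : ℝ) * (-y) ^ (k - n) *
        (((n + 1).descFactorial i : ℝ) * y ^ (n + 1 - i)) * x i = 0 := by
    refine Finset.sum_eq_zero fun i hi => ?_
    rw [Finset.mem_Icc] at hi
    have := aux_vanish (k + 1) i (by omega) y
    rw [Finset.sum_range_succ'] at this
    simp only [Nat.add_sub_add_right] at this
    rw [Nat.descFactorial_of_lt (by omega : 0 < i)] at this
    simp only [Nat.cast_zero, zero_mul, mul_zero, add_zero] at this
    rw [← Finset.sum_mul, this, zero_mul]
  have h1 := aux_vanish (k + 1) 0 (by omega) y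
  rw [Finset.sum_range_succ'] at h1
  simp only [Nat.add_sub_add_right, Nat.descFactorial_zero, Nat.cast_one, one_mul,
    Nat.sub_zero, Nat.choose_zero_right, pow_zero, mul_one] at h1
  rw [h0, add_zero, eq_neg_of_add_eq_zero_left h1, neg_pow y]
  ring

/-- There is a real polynomial `P` of degree exactly `k+1`, with leading coefficient
`(−1)^k · D / (2·(k+1)!)`, vanishing at every `y` which (together with some `X_1,…,X_k`)
satisfies the trace system with constants `c_1,…,c_{k+1}`. -/
theorem trace_system_poly (k : ℕ) (D : ℝ) (hD : D ≠ 0) (c : ℕ → ℝ) :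
    ∃ P : Polynomial ℝ,
      P.degree = (k + 1 : ℕ) ∧
      P.leadingCoeff = (-1) ^ k * D / (2 * (Nat.factorial (k + 1) : ℝ)) ∧
      ∀ (y : ℝ) (X : ℕ → ℝ), TraceSystem k D c y X → P.eval y = 0 := by
  set a : ℝ := (-1) ^ k * D / (2 * (Nat.factorial (k + 1) : ℝ)) with ha
  have hf : (Nat.factorial (k + 1) : ℝ) ≠ 0 := by positivity
  have ha0 : a ≠ 0 := by
    rw [ha]
    exact div_ne_zero (mul_ne_zero (pow_ne_zero _ (by norm_num)) hD) (mul_ne_zero two_ne_zero hf)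
  let Q : Polynomial ℝ := ∑ n ∈ Finset.range (k + 1),
    Polynomial.C (((k + 1).choose (n + 1) : ℝ) * (-1) ^ (k - n) * c (n + 1) /
      (Nat.factorial (k + 1) : ℝ)) * Polynomial.X ^ (k - n)
  have hlead : (Polynomial.C a * Polynomial.X ^ (k + 1)).degree = ((k + 1 : ℕ) : WithBot ℕ) :=
    Polynomial.degree_C_mul_X_pow _ ha0
  have hQ : Q.degree < (Polynomial.C a * Polynomial.X ^ (k + 1)).degree := by
    rw [hlead]
    refine lt_of_le_of_lt (Polynomial.degree_sum_le _ _) ?_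
    rw [Finset.sup_lt_iff (WithBot.bot_lt_coe _)]
    intro n _
    refine lt_of_le_of_lt (Polynomial.degree_C_mul_X_pow_le _ _) ?_
    exact_mod_cast (by omega : k - n < k + 1)
  refine ⟨Polynomial.C a * Polynomial.X ^ (k + 1) - Q, ?_, ?_, ?_⟩
  · rw [Polynomial.degree_sub_eq_left_of_degree_lt hQ, hlead]
  · rw [Polynomial.leadingCoeff_sub_of_degree_lt hQ, Polynomial.leadingCoeff_C_mul_X_pow]
  · intro y x h
    have hs := aux_sum k D c y x h
    have hQe : Q.eval y = ((-1) ^ k * D / 2 * y ^ (k + 1)) / (Nat.factorial (k + 1) : ℝ) := by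
      rw [← hs, Finset.sum_div]
      simp only [Q, Polynomial.eval_finset_sum, Polynomial.eval_mul, Polynomial.eval_C,
        Polynomial.eval_pow, Polynomial.eval_X]
      refine Finset.sum_congr rfl fun n _ => ?_
      rw [neg_pow y]
      ring
    simp only [Polynomial.eval_sub, hQe, Polynomial.eval_mul, Polynomial.eval_C,
      Polynomial.eval_pow, Polynomial.eval_X, ha]
    field_simp
    ring
end

section
/- Let M be a preconnected topological space, k a natural number, D a nonzero real number, and c_1, …, c_{k+1} real constants. Let I : M → ℝ be a continuous function and X_1, …, X_k : M → ℝ arbitrary functions such that at every point p ∈ M the values I(p), X_1(p), …, X_k(p) satisfy the trace system with constants c_1, …, c_{k+1}. Then I is a constant function on M, and moreover each X_i is a constant function on M. -/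
open Polynomial in
/-- Testing the trace functional on `(x - y)^m`. -/
theorem trace_aux (k : ℕ) (D : ℝ) (c : ℕ → ℝ) (y : ℝ) (X : ℕ → ℝ)
    (h : TraceSystem k D c y X) (m : ℕ) (hm1 : 1 ≤ m) (hm : m ≤ k + 1) :
    ∑ j ∈ Finset.range (m + 1),
        (-y) ^ (m - j) * (m.choose j : ℝ) * (if j = 0 then D / 2 else c j) =
      if m ≤ k then (m.factorial : ℝ) * X m else 0 := by
  let L : ℝ[X] →ₗ[ℝ] ℝ := (D / 2) • Polynomial.leval y +
    ∑ i ∈ Finset.Icc 1 k, X i • (Polynomial.leval y ∘ₗ (Polynomial.derivative ^ i))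
  have hL : ∀ P : ℝ[X], L P = D / 2 * P.eval y +
      ∑ i ∈ Finset.Icc 1 k, X i * (Polynomial.derivative^[i] P).eval y := by
    intro P
    simp [L, Polynomial.leval, LinearMap.sum_apply, Module.End.pow_apply]
  have hmon : ∀ j ≤ k + 1, L (Polynomial.X ^ j) = if j = 0 then D / 2 else c j := by
    intro j hj
    rw [hL]
    split_ifs with h0
    · subst h0
      have : ∀ i ∈ Finset.Icc 1 k,
          X i * (Polynomial.derivative^[i] ((Polynomial.X : ℝ[X]) ^ 0)).eval y = 0 := by
        intro i hi
        rw [Finset.mem_Icc] at hi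
        rw [Polynomial.iterate_derivative_X_pow_eq_smul,
          Nat.descFactorial_of_lt (by omega)]
        simp
      rw [Finset.sum_eq_zero this]
      simp
    · rw [← h j (Finset.mem_Icc.2 ⟨by omega, hj⟩)]
      congr 1
      · simp
      · refine Finset.sum_congr rfl fun i _ => ?_
        rw [Polynomial.iterate_derivative_X_pow_eq_smul]
        simp
        ring
  have e1 : L ((Polynomial.X - Polynomial.C y) ^ m) = ∑ j ∈ Finset.range (m + 1),
        (-y) ^ (m - j) * (m.choose j : ℝ) * (if j = 0 then D / 2 else c j) := by
    rw [sub_eq_add_neg, add_pow, map_sum]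
    refine Finset.sum_congr rfl fun j hj => ?_
    rw [Finset.mem_range] at hj
    rw [← hmon j (by omega), ← smul_eq_mul (a := (-y) ^ (m - j) * (m.choose j : ℝ)), ← map_smul]
    congr 1
    rw [Polynomial.smul_eq_C_mul]
    simp
    ring
  rw [← e1, hL]
  have e2 : ∀ i ∈ Finset.Icc 1 k,
      X i * (Polynomial.derivative^[i] ((Polynomial.X - Polynomial.C y) ^ m)).eval y =
        if m = i then (m.factorial : ℝ) * X m else 0 := by
    intro i hi
    rw [Polynomial.iterate_derivative_X_sub_pow]
    rcases lt_trichotomy m i with hlt | rfl | hgt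
    · rw [Nat.descFactorial_of_lt hlt, if_neg hlt.ne]; simp
    · simp [Nat.descFactorial_self]; ring
    · rw [if_neg hgt.ne']
      have : m - i ≠ 0 := by omega
      simp [this]
  rw [Finset.sum_congr rfl e2, Finset.sum_ite_eq]
  have : m ≠ 0 := by omega
  simp [this, hm1]

/-- If `M` is preconnected, `I : M → ℝ` is continuous and, at every point of `M`, the
values `I p, X_1 p, …, X_k p` satisfy the trace system with the fixed constants
`c_1, …, c_{k+1}` (and `D ≠ 0`), then `I` is constant on `M` and each `X_i`
(`1 ≤ i ≤ k`) is constant on `M`. -/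
theorem trace_system_const {M : Type*} [TopologicalSpace M] [PreconnectedSpace M]
    (k : ℕ) (D : ℝ) (hD : D ≠ 0) (c : ℕ → ℝ)
    (I : M → ℝ) (hI : Continuous I) (X : ℕ → M → ℝ)
    (hsys : ∀ p : M, TraceSystem k D c (I p) (fun i => X i p)) :
    (∃ a : ℝ, ∀ p : M, I p = a) ∧
      ∀ i ∈ Finset.Icc 1 k, ∃ b : ℝ, ∀ p : M, X i p = b := by
  have hfin : (Set.range I).Finite := by
    let Q : Polynomial ℝ := ∑ j ∈ Finset.range (k + 1 + 1),
      Polynomial.C (((-1) ^ (k + 1 - j) * ((k + 1).choose j : ℝ)) *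
        (if j = 0 then D / 2 else c j)) * Polynomial.X ^ (k + 1 - j)
    have hQ : Q ≠ 0 := by
      intro h0
      have h1 : Q.coeff (k + 1) = (-1) ^ (k + 1) * (D / 2) := by
        simp only [Q, Polynomial.finsetSum_coeff, Polynomial.coeff_C_mul,
          Polynomial.coeff_X_pow]
        rw [Finset.sum_eq_single 0]
        · simp
        · intro j _ hj0
          rw [if_neg (show ¬ (k + 1 = k + 1 - j) by omega), mul_zero]
        · simp
      rw [h0, Polynomial.coeff_zero] at h1
      have : (-1 : ℝ) ^ (k + 1) * (D / 2) ≠ 0 :=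
        mul_ne_zero (pow_ne_zero _ (by norm_num)) (div_ne_zero hD two_ne_zero)
      exact this h1.symm
    refine (Q.roots.toFinset.finite_toSet).subset ?_
    rintro _ ⟨p, rfl⟩
    have h := trace_aux k D c (I p) _ (hsys p) (k + 1) (by omega) le_rfl
    rw [if_neg (by omega)] at h
    simp only [Finset.mem_coe, Multiset.mem_toFinset, Polynomial.mem_roots hQ,
      Polynomial.IsRoot.def]
    rw [← h]
    simp only [Q, Polynomial.eval_finset_sum]
    refine Finset.sum_congr rfl fun j _ => ?_
    rw [neg_pow (I p)]
    simp only [Polynomial.eval_mul, Polynomial.eval_C, Polynomial.eval_pow, Polynomial.eval_X]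
    ring
  have hsub : (Set.range I).Subsingleton := by
    by_contra hn
    exact (isPreconnected_range hI).infinite_of_nontrivial
      (Set.not_subsingleton_iff.1 hn) hfin
  rcases isEmpty_or_nonempty M with hM | ⟨⟨q⟩⟩
  · exact ⟨⟨0, fun p => hM.elim p⟩, fun i _ => ⟨0, fun p => hM.elim p⟩⟩
  have hc : ∀ p, I p = I q := fun p => hsub ⟨p, rfl⟩ ⟨q, rfl⟩
  refine ⟨⟨I q, hc⟩, fun i hi => ⟨X i q, fun p => ?_⟩⟩
  rw [Finset.mem_Icc] at hi
  have h1 := trace_aux k D c (I p) _ (hsys p) i hi.1 (by omega)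
  have h2 := trace_aux k D c (I q) _ (hsys q) i hi.1 (by omega)
  rw [hc p, h2, if_pos hi.2, if_pos hi.2] at h1
  exact (mul_left_cancel₀ (by exact_mod_cast i.factorial_ne_zero) h1).symm
end

section
/- Let A be a commutative ℝ-algebra, D : A → A an ℝ-linear derivation, δ : A → A an ℝ-linear map, and L ∈ A an element with D L = 0, such that the commutation relation δ(D x) − D(δ x) = L · (D x) holds for all x ∈ A. Then for every natural number m and every η ∈ A, D^m(η) = 0 implies D^m(δ η) = 0. -/
/-- The commutator step in the proof of Lemma 2 (lem_1bal_coef) of the paper: let `D` be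
a derivation on a commutative `ℝ`-algebra `A`, `δ : A → A` an `ℝ`-linear map and `L ∈ A`
with `D L = 0`, satisfying the commutation relation `δ(D x) − D(δ x) = L · D x` for all
`x`. Then for every `m` and every `η ∈ A`, `D^m(η) = 0` implies `D^m(δ η) = 0`. -/
theorem iterate_derivation_commutator {A : Type*} [CommRing A] [Algebra ℝ A]
    (D : Derivation ℝ A A) (δ : A →ₗ[ℝ] A) (L : A)
    (hL : D L = 0) (hcomm : ∀ x : A, δ (D x) - D (δ x) = L * D x) :
    ∀ (m : ℕ) (η : A), (⇑D)^[m] η = 0 → (⇑D)^[m] (δ η) = 0 := by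
  have key : ∀ (m : ℕ) (η : A),
      (⇑D)^[m] (δ η) = δ ((⇑D)^[m] η) - (m : A) * (L * (⇑D)^[m] η) := by
    intro m η
    induction m with
    | zero => simp
    | succ k ih =>
      rw [Function.iterate_succ_apply', Function.iterate_succ_apply', ih, map_sub,
        Derivation.leibniz, Derivation.leibniz, hL, Derivation.map_natCast]
      have h := hcomm ((⇑D)^[k] η)
      simp only [smul_eq_mul, mul_zero, add_zero]
      push_cast
      linear_combination -h
  intro m η h
  rw [key, h]
  simp
end

section
/- Let V be a real vector space, B : V × V → ℝ a symmetric bilinear form, d ≥ 1, and ℓ, n ∈ V, m_1, …, m_d ∈ V a null frame: B(ℓ,ℓ) = B(n,n) = 0, B(ℓ,n) = 1, B(m_i,m_j) = δ_{ij}, B(ℓ,m_i) = B(n,m_i) = 0. Let Ω be a symmetric d × d real matrix with Σ_i Ω_{ii} = 0, and let C : V^4 → ℝ be the type N quadrilinear form C = 4 Σ_{i,j} Ω_{ij} · T^{(ij)}_{{abcd}}, where T^{(ij)}(x,y,z,w) = B(ℓ,x)·B(m_i,y)·B(ℓ,z)·B(m_j,w) and {abcd} denotes the symmetrization T_{{abcd}}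 = ½(T_{[ab][cd]} + T_{[cd][ab]}). Then: (i) for all x, y ∈ V the rank-2 frame contraction of C with itself over the last three slots vanishes, i.e. Σ C(x,a,b,c)·C(y,a*,b*,c*) = 0, where each contracted pair (a,a*), (b,b*), (c,c*) ranges independently over (ℓ,n), (n,ℓ), (m_1,m_1), …, (m_d,m_d); and (ii) the full frame contraction Σ C(a,b,c,e)·C(a*,b*,c*,e*) over all four slot pairs vanishes. -/
/-- Antisymmetrization `T_{[ab][cd]}` of a quadrilinear form over the two pairs of
arguments, each antisymmetrization carrying a factor `½`. -/
noncomputable def pairAntisym {V : Type*} (T : V → V → V → V → ℝ) : V → V → V → V → ℝ :=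
  fun x y z w => (T x y z w - T y x z w - T x y w z + T y x w z) / 4

/-- The Weyl-type symmetrization `T_{{abcd}} = ½(T_{[ab][cd]} + T_{[cd][ab]})`. -/
noncomputable def weylSym {V : Type*} (T : V → V → V → V → ℝ) : V → V → V → V → ℝ :=
  fun x y z w => (pairAntisym T x y z w + pairAntisym T z w x y) / 2

/-- The frame contraction of a pair of slots: the contracted pair `(a, a*)` ranges over
`(ℓ, n)`, `(n, ℓ)`, `(m_1, m_1)`, …, `(m_d, m_d)`, implementing index raising with the
inverse metric `g^{ab} = 2 ℓ^{(a} n^{b)} + Σ_i m_i^a m_i^b`. -/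
noncomputable def contractPair {V : Type*} (d : ℕ) (ℓ n : V) (m : Fin d → V)
    (F : V → V → ℝ) : ℝ :=
  F ℓ n + F n ℓ + ∑ i, F (m i) (m i)

/-- For the type N Weyl form (typeNWeyl) of the paper, both quadratic frame
contractions vanish: (i) `C_{acde} C_b{}^{cde} = 0` and (ii) `C_{cdef} C^{cdef} = 0`. -/
theorem typeN_weyl_contractions_vanish {V : Type*} [AddCommGroup V] [Module ℝ V]
    (B : V →ₗ[ℝ] V →ₗ[ℝ] ℝ) (hBsymm : ∀ x y : V, B x y = B y x)
    (d : ℕ) (hd : 1 ≤ d) (ℓ n : V) (m : Fin d → V)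
    (hll : B ℓ ℓ = 0) (hnn : B n n = 0) (hln : B ℓ n = 1)
    (hmm : ∀ i j, B (m i) (m j) = if i = j then (1 : ℝ) else 0)
    (hlm : ∀ i, B ℓ (m i) = 0) (hnm : ∀ i, B n (m i) = 0)
    (Ω : Matrix (Fin d) (Fin d) ℝ) (hΩsymm : ∀ i j, Ω i j = Ω j i)
    (hΩtr : ∑ i, Ω i i = 0)
    (C : V → V → V → V → ℝ)
    (hC : C = fun x y z w => 4 * ∑ i, ∑ j, Ω i j *
        weylSym (fun a b c e => B ℓ a * B (m i) b * B ℓ c * B (m j) e) x y z w) :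
    (∀ x y : V,
      contractPair d ℓ n m (fun a a' =>
        contractPair d ℓ n m (fun b b' =>
          contractPair d ℓ n m (fun c c' =>
            C x a b c * C y a' b' c'))) = 0) ∧
    contractPair d ℓ n m (fun a a' =>
      contractPair d ℓ n m (fun b b' =>
        contractPair d ℓ n m (fun c c' =>
          contractPair d ℓ n m (fun e e' =>
            C a b c e * C a' b' c' e')))) = 0 := by
  have hml : ∀ i, B (m i) ℓ = 0 := fun i => by rw [hBsymm, hlm]
  -- `C` vanishes when `ℓ` is inserted in one of the last two slots,
  have h3 : ∀ x y w, C x y ℓ w = 0 := by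
    intro x y w
    simp [hC, weylSym, pairAntisym, hll, hml]
  have h4 : ∀ x y z, C x y z ℓ = 0 := by
    intro x y z
    simp [hC, weylSym, pairAntisym, hll, hml]
  -- and when both of the last two slots are spacelike frame vectors.
  have hm : ∀ x y i j, C x y (m i) (m j) = 0 := by
    intro x y i j
    simp [hC, weylSym, pairAntisym, hlm]
  clear hC
  constructor
  · intro x y
    simp [contractPair, h3, h4, hm]
  · simp [contractPair, h3, h4, hm]
end

section
/- Let V be a real vector space, B : V × V → ℝ a symmetric bilinear form, d ≥ 1, and ℓ, n ∈ V, m_1, …, m_d ∈ V a null frame: B(ℓ,ℓ) = B(n,n) = 0, B(ℓ,n) = 1, B(m_i,m_j) = δ_{ij}, B(ℓ,m_i) = B(n,m_i) = 0. Let Ψ'_{ijk} be real numbers with Ψ'_{ijk} = −Ψ'_{ikj}, set Ψ'_i = Σ_j Ψ'_{jij}, and let Ω' be a symmetric d × d real matrix with Σ_i Ω'_{ii} = 0. Let C : V^4 → ℝ be the type III quadrilinear form C = 8 Σ_i Ψ'_i · U^{(i)}_{{abcd}} + 4 Σ_{i,j,k} Ψ'_{ijk} · W^{(ijk)}_{{abcd}}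 + 4 Σ_{i,j} Ω'_{ij} · T^{(ij)}_{{abcd}}, where U^{(i)}(x,y,z,w) = B(ℓ,x)B(n,y)B(ℓ,z)B(m_i,w), W^{(ijk)}(x,y,z,w) = B(ℓ,x)B(m_i,y)B(m_j,z)B(m_k,w), T^{(ij)}(x,y,z,w) = B(ℓ,x)B(m_i,y)B(ℓ,z)B(m_j,w), and {abcd} denotes the symmetrization T_{{abcd}} = ½(T_{[ab][cd]} + T_{[cd][ab]}). Then C is traceless: for all x, y ∈ V, C(ℓ,x,n,y) + C(n,x,ℓ,y) + Σ_{i=1}^{d} C(m_i,x,m_i,y) = 0. -/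
/-- Tracelessness of the type III Weyl form (typeIIIWeyl) of the paper: with
`Ψ'_i = Σ_j Ψ'_{jij}`, the form
`C = 8 Σ_i Ψ'_i ℓ_{{a} n_b ℓ_c m^{(i)}_{d}} + 4 Σ_{ijk} Ψ'_{ijk} ℓ_{{a} m^{(i)}_b m^{(j)}_c m^{(k)}_{d}}
 + 4 Σ_{ij} Ω'_{ij} ℓ_{{a} m^{(i)}_b ℓ_c m^{(j)}_{d}}`
is traceless with respect to the inverse-metric contraction over the first and third
slots in a null frame. -/
theorem typeIII_weyl_traceless {V : Type*} [AddCommGroup V] [Module ℝ V]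
    (B : V →ₗ[ℝ] V →ₗ[ℝ] ℝ) (hBsymm : ∀ x y : V, B x y = B y x)
    (d : ℕ) (hd : 1 ≤ d) (ℓ n : V) (m : Fin d → V)
    (hll : B ℓ ℓ = 0) (hnn : B n n = 0) (hln : B ℓ n = 1)
    (hmm : ∀ i j, B (m i) (m j) = if i = j then (1 : ℝ) else 0)
    (hlm : ∀ i, B ℓ (m i) = 0) (hnm : ∀ i, B n (m i) = 0)
    (Ψ : Fin d → Fin d → Fin d → ℝ)
    (hΨanti : ∀ i j k, Ψ i j k = -Ψ i k j)
    (Ψ₁ : Fin d → ℝ) (hΨ₁ : ∀ i, Ψ₁ i = ∑ j, Ψ j i j)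
    (Ω : Matrix (Fin d) (Fin d) ℝ) (hΩsymm : ∀ i j, Ω i j = Ω j i)
    (hΩtr : ∑ i, Ω i i = 0)
    (C : V → V → V → V → ℝ)
    (hC : C = fun x y z w =>
        8 * ∑ i, Ψ₁ i *
          weylSym (fun a b c e => B ℓ a * B n b * B ℓ c * B (m i) e) x y z w
      + 4 * ∑ i, ∑ j, ∑ k, Ψ i j k *
          weylSym (fun a b c e => B ℓ a * B (m i) b * B (m j) c * B (m k) e) x y z w
      + 4 * ∑ i, ∑ j, Ω i j *
          weylSym (fun a b c e => B ℓ a * B (m i) b * B ℓ c * B (m j) e) x y z w) :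
    ∀ x y : V, C ℓ x n y + C n x ℓ y + ∑ i, C (m i) x (m i) y = 0 := by
  intro x y
  have hnl : B n ℓ = 1 := by rw [hBsymm, hln]
  have hml : ∀ i, B (m i) ℓ = 0 := fun i => by rw [hBsymm, hlm]
  have hmn : ∀ i, B (m i) n = 0 := fun i => by rw [hBsymm, hnm]
  -- traces of the three elementary forms
  have hU : ∀ i,
      weylSym (fun a b c e => B ℓ a * B n b * B ℓ c * B (m i) e) ℓ x n y
      + weylSym (fun a b c e => B ℓ a * B n b * B ℓ c * B (m i) e) n x ℓ y
      + ∑ t, weylSym (fun a b c e => B ℓ a * B n b * B ℓ c * B (m i) e) (m t) x (m t) y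
      = -(B ℓ x * B (m i) y + B ℓ y * B (m i) x) / 8 := by
    intro i
    simp only [weylSym, pairAntisym, hll, hnn, hln, hnl, hml, hmn, hlm, hnm]
    simp
    ring
  have hW : ∀ i j k,
      weylSym (fun a b c e => B ℓ a * B (m i) b * B (m j) c * B (m k) e) ℓ x n y
      + weylSym (fun a b c e => B ℓ a * B (m i) b * B (m j) c * B (m k) e) n x ℓ y
      + ∑ t, weylSym (fun a b c e => B ℓ a * B (m i) b * B (m j) c * B (m k) e) (m t) x (m t) y
      = (if i = k then (B ℓ x * B (m j) y + B ℓ y * B (m j) x) / 8 else 0)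
        - (if i = j then (B ℓ x * B (m k) y + B ℓ y * B (m k) x) / 8 else 0) := by
    intro i j k
    have h : ∀ t, weylSym (fun a b c e => B ℓ a * B (m i) b * B (m j) c * B (m k) e)
        (m t) x (m t) y = if i = t then
          ((if k = t then (B ℓ x * B (m j) y + B ℓ y * B (m j) x) / 8 else 0)
        - (if j = t then (B ℓ x * B (m k) y + B ℓ y * B (m k) x) / 8 else 0)) else 0 := by
      intro t
      simp only [weylSym, pairAntisym, hlm, hmm]
      split_ifs <;> ring
    simp only [h, Finset.sum_ite_eq, Finset.mem_univ, if_true]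
    simp only [weylSym, pairAntisym, hll, hnn, hln, hnl, hml, hmn, hlm, hnm,
      eq_comm (a := i)]
    ring
  have hT : ∀ i j,
      weylSym (fun a b c e => B ℓ a * B (m i) b * B ℓ c * B (m j) e) ℓ x n y
      + weylSym (fun a b c e => B ℓ a * B (m i) b * B ℓ c * B (m j) e) n x ℓ y
      + ∑ t, weylSym (fun a b c e => B ℓ a * B (m i) b * B ℓ c * B (m j) e) (m t) x (m t) y
      = if i = j then B ℓ x * B ℓ y / 4 else 0 := by
    intro i j
    have h : ∀ t, weylSym (fun a b c e => B ℓ a * B (m i) b * B ℓ c * B (m j) e)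
        (m t) x (m t) y = if i = t then
          (if j = t then B ℓ x * B ℓ y / 4 else 0) else 0 := by
      intro t
      simp only [weylSym, pairAntisym, hlm, hmm]
      split_ifs <;> ring
    simp only [h, Finset.sum_ite_eq, Finset.mem_univ, if_true]
    simp only [weylSym, pairAntisym, hll, hnn, hln, hnl, hml, hmn, hlm, hnm,
      eq_comm (a := i)]
    ring
  -- linearity of the trace
  have hsum : C ℓ x n y + C n x ℓ y + ∑ t, C (m t) x (m t) y
      = 8 * ∑ i, Ψ₁ i * (-(B ℓ x * B (m i) y + B ℓ y * B (m i) x) / 8)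
      + 4 * ∑ i, ∑ j, ∑ k, Ψ i j k *
        ((if i = k then (B ℓ x * B (m j) y + B ℓ y * B (m j) x) / 8 else 0)
        - (if i = j then (B ℓ x * B (m k) y + B ℓ y * B (m k) x) / 8 else 0))
      + 4 * ∑ i, ∑ j, Ω i j * (if i = j then B ℓ x * B ℓ y / 4 else 0) := by
    simp only [← hU, ← hW, ← hT, hC]
    simp only [mul_add, Finset.sum_add_distrib, ← Finset.mul_sum]
    have e1 : ∀ F : Fin d → Fin d → ℝ, ∑ t, ∑ i, Ψ₁ i * F i t = ∑ i, Ψ₁ i * ∑ t, F i t := by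
      intro F
      rw [Finset.sum_comm]
      simp only [Finset.mul_sum]
    have e2 : ∀ F : Fin d → Fin d → Fin d → ℝ,
        ∑ t, ∑ i, ∑ j, Ω i j * F i j t = ∑ i, ∑ j, Ω i j * ∑ t, F i j t := by
      intro F
      rw [Finset.sum_comm]
      refine Finset.sum_congr rfl fun i _ => ?_
      rw [Finset.sum_comm]
      simp only [Finset.mul_sum]
    have e3 : ∀ F : Fin d → Fin d → Fin d → Fin d → ℝ,
        ∑ t, ∑ i, ∑ j, ∑ k, Ψ i j k * F i j k t
          = ∑ i, ∑ j, ∑ k, Ψ i j k * ∑ t, F i j k t := by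
      intro F
      rw [Finset.sum_comm]
      refine Finset.sum_congr rfl fun i _ => ?_
      rw [Finset.sum_comm]
      refine Finset.sum_congr rfl fun j _ => ?_
      rw [Finset.sum_comm]
      simp only [Finset.mul_sum]
    rw [e1 (fun i t => weylSym (fun a b c e => B ℓ a * B n b * B ℓ c * B (m i) e)
        (m t) x (m t) y),
      e2 (fun i j t => weylSym (fun a b c e => B ℓ a * B (m i) b * B ℓ c * B (m j) e)
        (m t) x (m t) y),
      e3 (fun i j k t => weylSym (fun a b c e => B ℓ a * B (m i) b * B (m j) c * B (m k) e)
        (m t) x (m t) y)]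
    ring
  rw [hsum]
  have hO : ∑ i, ∑ j, Ω i j * (if i = j then B ℓ x * B ℓ y / 4 else 0) = 0 := by
    simp only [mul_ite, mul_zero, Finset.sum_ite_eq, Finset.mem_univ, if_true]
    rw [← Finset.sum_mul, hΩtr, zero_mul]
  have hP : ∀ G : Fin d → ℝ, ∑ i, ∑ j, ∑ k, Ψ i j k *
        ((if i = k then G j else 0) - (if i = j then G k else 0))
      = 2 * ∑ i, Ψ₁ i * G i := by
    intro G
    have h1 : ∑ i, ∑ j, ∑ k, Ψ i j k * (if i = k then G j else 0) = ∑ i, Ψ₁ i * G i := by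
      simp only [mul_ite, mul_zero, Finset.sum_ite_eq, Finset.mem_univ, if_true]
      rw [Finset.sum_comm]
      simp only [hΨ₁, Finset.sum_mul]
    have h2 : ∑ i, ∑ j, ∑ k, Ψ i j k * (if i = j then G k else 0) = -∑ i, Ψ₁ i * G i := by
      rw [← h1, ← Finset.sum_neg_distrib]
      refine Finset.sum_congr rfl fun i _ => ?_
      rw [Finset.sum_comm, ← Finset.sum_neg_distrib]
      refine Finset.sum_congr rfl fun j _ => ?_
      rw [← Finset.sum_neg_distrib]
      refine Finset.sum_congr rfl fun k _ => ?_
      rw [hΨanti i k j]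
      ring
    simp only [mul_sub, Finset.sum_sub_distrib]
    rw [h1, h2]
    ring
  rw [hO, hP (fun j => (B ℓ x * B (m j) y + B ℓ y * B (m j) x) / 8)]
  simp only [neg_div, mul_neg, Finset.sum_neg_distrib]
  ring
end
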